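/- For every compact subset K of [0, ∞), the set {s ∈ K : there exists γ ∈ ℝ with s − 1/2 + iγ ∈ 𝔖} is finite. -/

import Mathlib

open MeasureTheory Set

/-- The ordinary differential operator `H_ζ` acting on functions on `ℝ`:
`(H_ζ f)(x) = f″(x) + (β₁(x)+β₂(x))·f′(x)
  + (ζ²·a(x)² − iζ·a′(x) + iζ·a(x)·(β₁(x)−β₂(x)) + β₃(x))·f(x)`. -/
noncomputable def Hop (a : ℝ → ℝ) (β₁ β₂ β₃ : ℝ → ℂ) (ζ : ℂ) (f : ℝ → ℂ) (x : ℝ) : ℂ :=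
  deriv (deriv f) x + (β₁ x + β₂ x) * deriv f x +
    (ζ ^ 2 * (Complex.ofReal (a x)) ^ 2 - Complex.I * ζ * Complex.ofReal (deriv a x)
      + Complex.I * ζ * Complex.ofReal (a x) * (β₁ x - β₂ x) + β₃ x) * f x

/-- The `L²` norm of `f` over the set `J ⊆ ℝ` (w.r.t. Lebesgue measure). -/
noncomputable def L2 (f : ℝ → ℂ) (J : Set ℝ) : ℝ := (∫ x in J, ‖f x‖ ^ 2) ^ ((1 : ℝ)/2)

/-- The set `𝔖` of `ζ ∈ ℂ` for which the Dirichlet problem `H_ζ g = 0` on `I = [-r,r]`,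
`g(-r) = g(r) = 0`, has a nontrivial solution. -/
def frakS (r : ℝ) (a : ℝ → ℝ) (β₁ β₂ β₃ : ℝ → ℂ) : Set ℂ :=
  {ζ : ℂ | ∃ g : ℝ → ℂ, ContDiff ℝ 2 g ∧ (∃ x ∈ Icc (-r) r, g x ≠ 0) ∧
    (∀ x ∈ Icc (-r) r, Hop a β₁ β₂ β₃ ζ g x = 0) ∧ g (-r) = 0 ∧ g r = 0}

theorem isUnit_one_sub_of_norm_pow_lt_one {R : Type*} [NormedRing R] [HasSummableGeomSeries R]
    {x : R} {n : ℕ} (h : ‖x ^ n‖ < 1) : IsUnit (1 - x) := by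
  have hunit := isUnit_one_sub_of_norm_lt_one h
  rw [← mul_neg_geom_sum] at hunit
  have hcomm : Commute (1 - x) (∑ i ∈ Finset.range n, x ^ i) := by
    rw [Commute, SemiconjBy, mul_neg_geom_sum, geom_sum_mul_neg]
  exact (hcomm.isUnit_mul_iff.1 hunit).1

theorem differentiable_inverse_one_sub_apply {E : Type*} [NormedCommRing E] [NormedAlgebra ℂ E]
    [CompleteSpace E] (A B : E →L[ℂ] E) {q v : ℂ → E} (hq : Differentiable ℂ q)
    (hv : Differentiable ℂ v)
    (hunit : ∀ ζ, IsUnit (1 - -(A + ContinuousLinearMap.mul ℂ E (q ζ) * B))) :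
    Differentiable ℂ fun ζ =>
      Ring.inverse (1 - -(A + ContinuousLinearMap.mul ℂ E (q ζ) * B)) (v ζ) := by
  have hmul : Differentiable ℂ fun ζ => ContinuousLinearMap.mul ℂ E (q ζ) :=
    (ContinuousLinearMap.mul ℂ E).differentiable.comp hq
  have hop : Differentiable ℂ fun ζ => 1 - -(A + ContinuousLinearMap.mul ℂ E (q ζ) * B) :=
    ((hmul.mul_const B).const_add A).neg.const_sub 1
  have hinv : Differentiable ℂ fun ζ =>
      Ring.inverse (1 - -(A + ContinuousLinearMap.mul ℂ E (q ζ) * B)) :=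
    fun ζ => DifferentiableAt.fun_comp' ζ (differentiableAt_inverse (hunit ζ)) (hop ζ)
  exact hinv.clm_apply hv

section Volterra

variable {l u : ℝ}

/-- The integration operator `f ↦ (x ↦ ∫ t in l..x, f t)` on continuous functions on `[l, u]`. -/
noncomputable def volterra (h : l ≤ u) : C(Icc l u, ℂ) →L[ℂ] C(Icc l u, ℂ) :=
  LinearMap.mkContinuous
    { toFun := fun f => ⟨fun x => ∫ t in l..(x : ℝ), IccExtend h f t,
        (intervalIntegral.continuous_primitive
          (fun _ _ => (f.continuous.Icc_extend' (h := h)).intervalIntegrable _ _) l).comp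
          continuous_subtype_val⟩
      map_add' := fun f g => by
        ext x
        exact intervalIntegral.integral_add
          ((f.continuous.Icc_extend' (h := h)).intervalIntegrable _ _)
          ((g.continuous.Icc_extend' (h := h)).intervalIntegrable _ _)
      map_smul' := fun c f => by
        ext x
        exact intervalIntegral.integral_smul c (IccExtend h f) }
    (u - l)
    (fun f => by
      have hul : 0 ≤ u - l := sub_nonneg.2 h
      refine (ContinuousMap.norm_le _ (by positivity)).2 fun x => ?_
      have hx : |(x : ℝ) - l| ≤ u - l := by
        rw [abs_of_nonneg (sub_nonneg.2 x.2.1)]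
        linarith [x.2.2]
      refine (intervalIntegral.norm_integral_le_of_norm_le_const (C := ‖f‖)
        fun t _ => f.norm_coe_le_norm _).trans ?_
      rw [mul_comm]
      gcongr)

theorem volterra_apply (h : l ≤ u) (f : C(Icc l u, ℂ)) (x : Icc l u) :
    volterra h f x = ∫ t in l..(x : ℝ), IccExtend h f t := rfl

/-- The primitive vanishing at `l` of the restriction of `f'` is `f - f l`. -/
theorem volterra_eq_sub_of_hasDerivAt (h : l ≤ u) {f f' : ℝ → ℂ} (φ : C(Icc l u, ℂ))
    (hφ : ∀ x, φ x = f' x) (hf : ∀ x, HasDerivAt f (f' x) x) (hf' : Continuous f')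
    (x : Icc l u) : volterra h φ x = f x - f l := by
  rw [volterra_apply, ← intervalIntegral.integral_eq_sub_of_hasDerivAt (fun x _ => hf x)
    (hf'.intervalIntegrable _ _)]
  refine intervalIntegral.integral_congr fun t ht => ?_
  rw [uIcc_of_le x.2.1] at ht
  rw [IccExtend_of_mem h φ ⟨ht.1, ht.2.trans x.2.2⟩, hφ]

theorem norm_volterra_le_pow (h : l ≤ u) {f : C(Icc l u, ℂ)} {M : ℝ} {n : ℕ}
    (hf : ∀ x : Icc l u, ‖f x‖ ≤ M * (x - l) ^ n / n.factorial) (x : Icc l u) :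
    ‖volterra h f x‖ ≤ M * (x - l) ^ (n + 1) / (n + 1).factorial := by
  have hint : ∫ t in l..(x : ℝ), M * (t - l) ^ n / n.factorial
      = M * (x - l) ^ (n + 1) / (n + 1).factorial := by
    rw [intervalIntegral.integral_div, intervalIntegral.integral_const_mul,
      intervalIntegral.integral_comp_sub_right (fun t => t ^ n), integral_pow, Nat.factorial_succ]
    push_cast
    simp
    field_simp
  rw [volterra_apply, ← hint]
  refine intervalIntegral.norm_integral_le_of_norm_le x.2.1 (Filter.Eventually.of_forall ?_)
    (Continuous.intervalIntegrable (by fun_prop) _ _)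
  intro t ht
  have hmem : t ∈ Icc l u := ⟨ht.1.le, ht.2.trans x.2.2⟩
  rw [IccExtend_of_mem h f hmem]
  exact hf ⟨t, hmem⟩

/-- The operator `w ↦ -(b · ∫ w + q · ∫∫ w)`, whose fixed-point equation is the integral form of
`g'' + b g' + q g = 0` in the unknown `w = g''`. -/
noncomputable def secondOrderVolterra (h : l ≤ u) (b q : C(Icc l u, ℂ)) :
    C(Icc l u, ℂ) →L[ℂ] C(Icc l u, ℂ) :=
  -(ContinuousLinearMap.mul ℂ _ b * volterra h
    + ContinuousLinearMap.mul ℂ _ q * (volterra h * volterra h))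

theorem secondOrderVolterra_apply (h : l ≤ u) (b q f : C(Icc l u, ℂ)) :
    secondOrderVolterra h b q f = -(b * volterra h f + q * volterra h (volterra h f)) := rfl

theorem norm_secondOrderVolterra_pow_le (h : l ≤ u) (b q f : C(Icc l u, ℂ)) (n : ℕ)
    (x : Icc l u) :
    ‖(secondOrderVolterra h b q ^ n) f x‖
      ≤ ((‖b‖ + ‖q‖ * (u - l)) ^ n * ‖f‖) * (x - l) ^ n / n.factorial := by
  induction n generalizing x with
  | zero => simpa using f.norm_coe_le_norm x
  | succ n ih =>
    have hul : 0 ≤ u - l := sub_nonneg.2 h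
    set M := (‖b‖ + ‖q‖ * (u - l)) ^ n * ‖f‖ with hM
    set p := (secondOrderVolterra h b q ^ n) f with hp
    have h1 := norm_volterra_le_pow h ih
    have h2 := norm_volterra_le_pow h h1 x
    have hx0 : 0 ≤ (x : ℝ) - l := sub_nonneg.2 x.2.1
    have hM0 : 0 ≤ M := by positivity
    set R := M * ((x : ℝ) - l) ^ (n + 1) / (n + 1).factorial with hR
    have hR0 : 0 ≤ R := by positivity
    have h3 : ‖volterra h (volterra h p) x‖ ≤ (u - l) * R := by
      refine h2.trans ?_
      have : M * ((x : ℝ) - l) ^ (n + 1 + 1) / (n + 1 + 1).factorial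
          = ((x : ℝ) - l) / (n + 1 + 1 : ℝ) * R := by
        rw [hR, Nat.factorial_succ (n + 1)]
        push_cast
        field_simp
        ring
      rw [this]
      gcongr
      refine (div_le_self hx0 (by linarith [(n.cast_nonneg : (0 : ℝ) ≤ n)])).trans ?_
      linarith [x.2.2]
    rw [pow_succ', mul_apply_eq_comp, secondOrderVolterra_apply, ← hp]
    calc ‖(-(b * volterra h p + q * volterra h (volterra h p))) x‖
        = ‖b x * volterra h p x + q x * volterra h (volterra h p) x‖ :=
          norm_neg _
      _ ≤ ‖b x‖ * ‖volterra h p x‖ + ‖q x‖ * ‖volterra h (volterra h p) x‖ := by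
          simpa only [norm_mul] using
            norm_add_le (b x * volterra h p x) (q x * volterra h (volterra h p) x)
      _ ≤ ‖b‖ * R + ‖q‖ * ((u - l) * R) := by
          gcongr
          · exact b.norm_coe_le_norm x
          · exact h1 x
          · exact q.norm_coe_le_norm x
      _ = _ := by
          rw [hR, hM]
          ring

theorem isUnit_one_sub_secondOrderVolterra (h : l ≤ u) (b q : C(Icc l u, ℂ)) :
    IsUnit (1 - secondOrderVolterra h b q) := by
  have hul : 0 ≤ u - l := sub_nonneg.2 h
  obtain ⟨n, hn⟩ := ((FloorSemiring.tendsto_pow_div_factorial_atTop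
    ((‖b‖ + ‖q‖ * (u - l)) * (u - l))).eventually (gt_mem_nhds one_pos)).exists
  have hnorm : ‖secondOrderVolterra h b q ^ n‖ < 1 := by
    refine (ContinuousLinearMap.opNorm_le_bound _ (by positivity) fun f => ?_).trans_lt hn
    refine (ContinuousMap.norm_le _ (by positivity)).2 fun x => ?_
    refine (norm_secondOrderVolterra_pow_le h b q f n x).trans ?_
    have hx0 : 0 ≤ (x : ℝ) - l := sub_nonneg.2 x.2.1
    calc _ ≤ (‖b‖ + ‖q‖ * (u - l)) ^ n * ‖f‖ * (u - l) ^ n / n.factorial := by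
          gcongr
          exact x.2.2
      _ = _ := by
          rw [mul_pow]
          ring
  exact isUnit_one_sub_of_norm_pow_lt_one (R := C(Icc l u, ℂ) →L[ℂ] C(Icc l u, ℂ)) hnorm

/-- The function `x ↦ x - l` on `[l, u]`. -/
def shiftedId (l u : ℝ) : C(Icc l u, ℂ) :=
  ⟨fun x => ((x - l : ℝ) : ℂ), by fun_prop⟩

/-- The second derivative of the solution of `g'' + b g' + q g = 0`, `g l = 0`, `g' l = 1`. -/
noncomputable def shootingDeriv2 (h : l ≤ u) (b q : C(Icc l u, ℂ)) : C(Icc l u, ℂ) :=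
  Ring.inverse (1 - secondOrderVolterra h b q) (-(b + q * shiftedId l u))

/-- The solution of `g'' + b g' + q g = 0`, `g l = 0`, `g' l = 1` on `[l, u]`. -/
noncomputable def shooting (h : l ≤ u) (b q : C(Icc l u, ℂ)) : C(Icc l u, ℂ) :=
  shiftedId l u + volterra h (volterra h (shootingDeriv2 h b q))

theorem one_sub_secondOrderVolterra_shootingDeriv2 (h : l ≤ u) (b q : C(Icc l u, ℂ)) :
    (1 - secondOrderVolterra h b q) (shootingDeriv2 h b q) = -(b + q * shiftedId l u) := by
  rw [shootingDeriv2, ← mul_apply_eq_comp,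
    Ring.mul_inverse_cancel _ (isUnit_one_sub_secondOrderVolterra h b q)]
  rfl

theorem eq_smul_shootingDeriv2 (h : l ≤ u) {b q w : C(Icc l u, ℂ)} {c : ℂ}
    (hw : (1 - secondOrderVolterra h b q) w = c • -(b + q * shiftedId l u)) :
    w = c • shootingDeriv2 h b q := by
  rw [shootingDeriv2, ← map_smul, ← hw, ← mul_apply_eq_comp,
    Ring.inverse_mul_cancel _ (isUnit_one_sub_secondOrderVolterra h b q)]
  rfl

/-- Every solution vanishing at the left endpoint is a multiple of `shooting`. -/
theorem eq_deriv_mul_shooting (h : l ≤ u) (b q : C(Icc l u, ℂ)) {g : ℝ → ℂ}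
    (hg : ContDiff ℝ 2 g) (hgl : g l = 0)
    (hode : ∀ x : Icc l u, deriv (deriv g) x + b x * deriv g x + q x * g x = 0) (x : Icc l u) :
    g x = deriv g l * shooting h b q x := by
  have hg' : ContDiff ℝ 1 (deriv g) := (contDiff_succ_iff_deriv (n := 1)).1 hg |>.2.2
  have hg'' : Continuous (deriv (deriv g)) := hg'.continuous_deriv le_rfl
  have hd1 : ∀ x, HasDerivAt g (deriv g x) x :=
    fun x => (hg.differentiable two_ne_zero x).hasDerivAt
  have hd2 : ∀ x, HasDerivAt (deriv g) (deriv (deriv g) x) x :=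
    fun x => (hg'.differentiable one_ne_zero x).hasDerivAt
  let w : C(Icc l u, ℂ) := ⟨fun x => deriv (deriv g) x, by fun_prop⟩
  have hJ : ∀ x : Icc l u, volterra h w x = deriv g x - deriv g l :=
    volterra_eq_sub_of_hasDerivAt h w (fun _ => rfl) hd2 hg''
  have hJJ : ∀ x : Icc l u,
      volterra h (volterra h w) x = g x - deriv g l * shiftedId l u x := by
    intro x
    have hd : ∀ x : ℝ, HasDerivAt (fun x : ℝ => g x - deriv g l * ((x - l : ℝ) : ℂ))
        (deriv g x - deriv g l) x := by
      intro x
      have := (((hasDerivAt_id x).sub_const l).ofReal_comp).const_mul (deriv g l)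
      simpa using (hd1 x).fun_sub this
    rw [volterra_eq_sub_of_hasDerivAt h (volterra h w) hJ hd (by fun_prop)]
    simp [hgl, shiftedId]
  have hw : w = deriv g l • shootingDeriv2 h b q := by
    refine eq_smul_shootingDeriv2 h ?_
    ext x
    have hx := hode x
    simp only [sub_apply, one_apply_eq_self,
      secondOrderVolterra_apply, ContinuousMap.sub_apply, ContinuousMap.neg_apply,
      ContinuousMap.add_apply, ContinuousMap.mul_apply, ContinuousMap.smul_apply, hJ, hJJ,
      smul_eq_mul]
    change deriv (deriv g) x - _ = _
    linear_combination hx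
  have hx := hJJ x
  rw [hw, map_smul, map_smul] at hx
  simp only [ContinuousMap.smul_apply, smul_eq_mul] at hx
  rw [shooting, ContinuousMap.add_apply]
  linear_combination -hx

/-- `shooting` extends to a `C²` function on the line that solves the equation on `[l, u]`. -/
theorem exists_contDiff_eq_shooting (h : l ≤ u) (b q : C(Icc l u, ℂ)) :
    ∃ g : ℝ → ℂ, ContDiff ℝ 2 g ∧ g l = 0 ∧ deriv g l = 1 ∧
      (∀ x : Icc l u, deriv (deriv g) x + b x * deriv g x + q x * g x = 0) ∧
      ∀ x : Icc l u, g x = shooting h b q x := by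
  set w := shootingDeriv2 h b q with hw
  have hwc : Continuous (IccExtend h w) := w.continuous.Icc_extend'
  let g' : ℝ → ℂ := fun x => 1 + ∫ t in l..x, IccExtend h w t
  have hg'd : ∀ x, HasDerivAt g' (IccExtend h w x) x :=
    fun x => (hwc.integral_hasStrictDerivAt l x).hasDerivAt.const_add 1
  have hg'c : Continuous g' := continuous_iff_continuousAt.2 fun x => (hg'd x).continuousAt
  let g : ℝ → ℂ := fun x => ∫ t in l..x, g' t
  have hgd : ∀ x, HasDerivAt g (g' x) x :=
    fun x => (hg'c.integral_hasStrictDerivAt l x).hasDerivAt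
  have hderiv : deriv g = g' := funext fun x => (hgd x).deriv
  have hderiv2 : deriv g' = IccExtend h w := funext fun x => (hg'd x).deriv
  have hJ : ∀ x : Icc l u, volterra h w x = g' x - 1 := fun x => by
    simp [g', volterra_apply]
  have hJJ : ∀ x : Icc l u, g x = shooting h b q x := by
    intro x
    have hd : ∀ x : ℝ, HasDerivAt (fun x : ℝ => g x - ((x - l : ℝ) : ℂ)) (g' x - 1) x := by
      intro x
      simpa using (hgd x).fun_sub (((hasDerivAt_id x).sub_const l).ofReal_comp)
    rw [shooting, ContinuousMap.add_apply,
      volterra_eq_sub_of_hasDerivAt h (volterra h w) hJ hd (by fun_prop)]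
    simp [g, shiftedId]
  have hC1 : ContDiff ℝ 1 g' := contDiff_one_iff_deriv.2
    ⟨fun x => (hg'd x).differentiableAt, hderiv2 ▸ hwc⟩
  refine ⟨g, ?_, by simp [g], by simp [hderiv, g'], fun x => ?_, hJJ⟩
  · exact (contDiff_succ_iff_deriv (n := 1)).2
      ⟨fun x => (hgd x).differentiableAt, by simp, hderiv ▸ hC1⟩
  · have heq := congrArg (fun f : C(Icc l u, ℂ) => f x)
      (one_sub_secondOrderVolterra_shootingDeriv2 h b q)
    simp only [sub_apply, one_apply_eq_self,
      secondOrderVolterra_apply, ContinuousMap.sub_apply, ContinuousMap.neg_apply,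
      ContinuousMap.add_apply, ContinuousMap.mul_apply, ← hw, hJ] at heq
    rw [hderiv, hderiv2, IccExtend_val, hJJ, shooting, ContinuousMap.add_apply, ← hw]
    linear_combination heq

/-- Each value of the shooting solution depends holomorphically on a parameter in `q`. -/
theorem differentiable_shooting (h : l ≤ u) (b : C(Icc l u, ℂ)) {q : ℂ → C(Icc l u, ℂ)}
    (hq : Differentiable ℂ q) (x : Icc l u) :
    Differentiable ℂ fun ζ => shooting h b (q ζ) x := by
  have hw : Differentiable ℂ fun ζ => shootingDeriv2 h b (q ζ) :=
    differentiable_inverse_one_sub_apply _ _ hq ((hq.mul_const _).const_add _).neg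
      fun ζ => isUnit_one_sub_secondOrderVolterra h b (q ζ)
  have hs : Differentiable ℂ fun ζ => shooting h b (q ζ) :=
    (((volterra h).differentiable.comp ((volterra h).differentiable.comp hw))).const_add _
  exact (ContinuousMap.evalCLM ℂ x).differentiable.comp hs

end Volterra

/-- A solution of `g'' + b g' + q g = 0` with Dirichlet conditions vanishes when `-Re q` dominates
`‖b‖²`. -/
theorem eq_zero_of_dirichlet_of_re_lt {l u : ℝ} {b q g : ℝ → ℂ} (hg : ContDiff ℝ 2 g)
    (hode : ∀ x ∈ Icc l u, deriv (deriv g) x + b x * deriv g x + q x * g x = 0)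
    (hq : ∀ x ∈ Icc l u, ‖b x‖ ^ 2 + 1 ≤ -(q x).re)
    (hgl : g l = 0) (hgu : g u = 0) : ∀ x ∈ Icc l u, g x = 0 := by
  have hg' : ContDiff ℝ 1 (deriv g) := (contDiff_succ_iff_deriv (n := 1)).1 hg |>.2.2
  have hd1 : ∀ x, HasDerivAt g (deriv g x) x :=
    fun x => (hg.differentiable two_ne_zero x).hasDerivAt
  have hd2 : ∀ x, HasDerivAt (deriv g) (deriv (deriv g) x) x :=
    fun x => (hg'.differentiable one_ne_zero x).hasDerivAt
  let φ : ℝ → ℝ := fun x => inner ℝ (g x) (deriv g x)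
  have hφ : ∀ x, HasDerivAt φ (inner ℝ (g x) (deriv (deriv g) x)
      + inner ℝ (deriv g x) (deriv g x)) x := fun x => (hd1 x).inner ℝ (hd2 x)
  have hpos : ∀ x ∈ Icc l u, ‖g x‖ ^ 2 ≤ deriv φ x := by
    intro x hx
    have h2 : deriv (deriv g) x = -(b x * deriv g x) - q x * g x := by
      linear_combination hode x hx
    have h3 : inner ℝ (g x) (q x * g x) = (q x).re * ‖g x‖ ^ 2 := by
      rw [Complex.inner, mul_assoc, Complex.mul_conj, Complex.normSq_eq_norm_sq,
        Complex.re_mul_ofReal]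
    have h4 : inner ℝ (g x) (b x * deriv g x) ≤ ‖g x‖ * (‖b x‖ * ‖deriv g x‖) := by
      simpa only [norm_mul] using real_inner_le_norm (g x) (b x * deriv g x)
    rw [(hφ x).deriv, h2, inner_sub_right, inner_neg_right, h3, real_inner_self_eq_norm_sq]
    nlinarith [mul_le_mul_of_nonneg_right (hq x hx) (sq_nonneg ‖g x‖),
      sq_nonneg (‖deriv g x‖ - ‖b x‖ * ‖g x‖ / 2), sq_nonneg (‖b x‖ * ‖g x‖)]
  have hmono : MonotoneOn φ (Icc l u) :=
    monotoneOn_of_deriv_nonneg (convex_Icc l u) (fun x _ => (hφ x).continuousAt.continuousWithinAt)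
      (fun x _ => (hφ x).differentiableAt.differentiableWithinAt)
      fun x hx => (sq_nonneg _).trans (hpos x (interior_subset hx))
  have hφl : φ l = 0 := by simp [φ, hgl]
  have hφu : φ u = 0 := by simp [φ, hgu]
  have hzero : ∀ x ∈ Icc l u, φ x = 0 := fun x hx => by
    have hlu := hx.1.trans hx.2
    exact le_antisymm (hφu ▸ hmono hx (right_mem_Icc.2 hlu) hx.2)
      (hφl ▸ hmono (left_mem_Icc.2 hlu) hx hx.1)
  intro x hx
  rcases eq_or_lt_of_le hx.1 with rfl | hlx
  · exact hgl
  rcases eq_or_lt_of_le hx.2 with rfl | hxu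
  · exact hgu
  have hev : φ =ᶠ[nhds x] fun _ => 0 := by
    filter_upwards [Icc_mem_nhds hlx hxu] with y hy using hzero y hy
  have := hpos x hx
  rw [hev.deriv_eq, deriv_const] at this
  exact norm_eq_zero.1 (pow_eq_zero_iff two_ne_zero |>.1 (le_antisymm this (sq_nonneg _)))

/-- In a vertical strip, points of `frakS` have bounded imaginary part. -/
theorem exists_abs_im_le_of_mem_frakS (r : ℝ) {a : ℝ → ℝ} (ha : ContDiff ℝ (⊤ : ℕ∞) a)
    (ha0 : ∀ x ∈ Icc (-r) r, a x ≠ 0) {β₁ β₂ β₃ : ℝ → ℂ} (hβ₁ : Continuous β₁)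
    (hβ₂ : Continuous β₂) (hβ₃ : Continuous β₃) (S : ℝ) :
    ∃ M : ℝ, ∀ ζ ∈ frakS r a β₁ β₂ β₃, |ζ.re| ≤ S → |ζ.im| ≤ M := by
  have hac : Continuous a := ha.continuous
  have ha'c : Continuous (deriv a) := ha.continuous_deriv (by simp)
  have bound : ∀ f : ℝ → ℂ, Continuous f → ∃ C, 0 ≤ C ∧ ∀ x ∈ Icc (-r) r, ‖f x‖ ≤ C := by
    intro f hf
    obtain ⟨C, hC⟩ := isCompact_Icc.exists_bound_of_continuousOn hf.continuousOn
    exact ⟨max C 0, le_max_right _ _, fun x hx => (hC x hx).trans (le_max_left _ _)⟩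
  obtain ⟨A, hA0, hA⟩ := bound (fun x => (a x : ℂ) ^ 2) (by fun_prop)
  obtain ⟨m, hm0, hm⟩ : ∃ m, 0 < m ∧ ∀ x ∈ Icc (-r) r, m ≤ a x ^ 2 := by
    have hcont : ContinuousOn (fun x => a x ^ 2) (Icc (-r) r) := by fun_prop
    exact isCompact_Icc.exists_forall_le' hcont fun x hx => by have := ha0 x hx; positivity
  obtain ⟨B, hB0, hB⟩ := bound (fun x => β₁ x + β₂ x) (by fun_prop)
  obtain ⟨L, hL0, hL⟩ := bound
    (fun x => -Complex.I * ((deriv a x : ℝ) : ℂ) + Complex.I * (a x : ℂ) * (β₁ x - β₂ x)) (by fun_prop)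
  obtain ⟨N, hN0, hN⟩ := bound β₃ hβ₃
  set C := B ^ 2 + 1 + S ^ 2 * A + |S| * L + N with hC
  have hC0 : 0 ≤ C := by positivity
  refine ⟨max 1 ((L + C) / m), fun ζ hζ hS => ?_⟩
  by_contra! hlt
  obtain ⟨h1, h2⟩ := max_lt_iff.1 hlt
  rw [div_lt_iff₀ hm0] at h2
  obtain ⟨g, hg, ⟨x, hx, hgx⟩, hode, hgl, hgu⟩ := hζ
  refine hgx (eq_zero_of_dirichlet_of_re_lt hg hode (fun y hy => ?_) hgl hgu x hx)
  set k := -Complex.I * ((deriv a y : ℝ) : ℂ) + Complex.I * (a y : ℂ) * (β₁ y - β₂ y) with hk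
  have hre : (ζ ^ 2 * (a y : ℂ) ^ 2 - Complex.I * ζ * ((deriv a y : ℝ) : ℂ)
      + Complex.I * ζ * (a y : ℂ) * (β₁ y - β₂ y) + β₃ y).re
      = (ζ.re ^ 2 - ζ.im ^ 2) * a y ^ 2 + (ζ * k).re + (β₃ y).re := by
    have : ζ ^ 2 * (a y : ℂ) ^ 2 - Complex.I * ζ * ((deriv a y : ℝ) : ℂ)
      + Complex.I * ζ * (a y : ℂ) * (β₁ y - β₂ y) + β₃ y
      = ζ ^ 2 * ((a y ^ 2 : ℝ) : ℂ) + ζ * k + β₃ y := by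
      rw [hk]
      push_cast
      ring
    rw [this, Complex.add_re, Complex.add_re, Complex.re_mul_ofReal, pow_two ζ, Complex.mul_re]
    ring
  have hAy : a y ^ 2 ≤ A := by simpa using hA y hy
  have hk1 : (ζ * k).re ≤ (|S| + |ζ.im|) * L := by
    refine (Complex.re_le_norm _).trans ?_
    rw [norm_mul]
    gcongr
    · exact (Complex.norm_le_abs_re_add_abs_im ζ).trans
        (add_le_add_left (hS.trans (le_abs_self S)) _)
    · exact hL y hy
  have hN1 : (β₃ y).re ≤ N := (Complex.re_le_norm _).trans (hN y hy)
  have hB1 : ‖β₁ y + β₂ y‖ ^ 2 ≤ B ^ 2 := by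
    gcongr
    exact hB y hy
  have hS2 : ζ.re ^ 2 * a y ^ 2 ≤ S ^ 2 * A :=
    mul_le_mul (sq_le_sq.2 (hS.trans (le_abs_self S))) hAy (sq_nonneg _) (sq_nonneg _)
  have him : ζ.im ^ 2 * m ≤ ζ.im ^ 2 * a y ^ 2 := by
    gcongr
    exact hm y hy
  have hbig : C + |ζ.im| * L ≤ ζ.im ^ 2 * m := by
    rw [← sq_abs ζ.im]
    nlinarith [mul_le_mul_of_nonneg_left h2.le (abs_nonneg ζ.im)]
  rw [hre]
  linarith

/-- The points of `frakS` are exactly the zeros of a shooting function that is entire in `ζ`. -/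
theorem exists_differentiable_mem_frakS_iff (r : ℝ) (hr : 0 < r) {a : ℝ → ℝ}
    (ha : ContDiff ℝ (⊤ : ℕ∞) a) {β₁ β₂ β₃ : ℝ → ℂ} (hβ₁ : Continuous β₁)
    (hβ₂ : Continuous β₂) (hβ₃ : Continuous β₃) :
    ∃ D : ℂ → ℂ, Differentiable ℂ D ∧ ∀ ζ, ζ ∈ frakS r a β₁ β₂ β₃ ↔ D ζ = 0 := by
  have hac : Continuous a := ha.continuous
  have ha'c : Continuous (deriv a) := ha.continuous_deriv (by simp)
  have h : -r ≤ r := by linarith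
  let b : C(Icc (-r) r, ℂ) := ⟨fun x => β₁ x + β₂ x, by fun_prop⟩
  let p₂ : C(Icc (-r) r, ℂ) := ⟨fun x => (a x : ℂ) ^ 2, by fun_prop⟩
  let p₁ : C(Icc (-r) r, ℂ) :=
    ⟨fun x => -Complex.I * ((deriv a x : ℝ) : ℂ) + Complex.I * (a x : ℂ) * (β₁ x - β₂ x), by fun_prop⟩
  let p₀ : C(Icc (-r) r, ℂ) := ⟨fun x => β₃ x, by fun_prop⟩
  let q : ℂ → C(Icc (-r) r, ℂ) := fun ζ => ζ ^ 2 • p₂ + ζ • p₁ + p₀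
  have hq : Differentiable ℂ q := by fun_prop
  have hHop : ∀ ζ g (x : Icc (-r) r), Hop a β₁ β₂ β₃ ζ g x
      = deriv (deriv g) x + b x * deriv g x + q ζ x * g x := by
    intro ζ g x
    simp only [Hop, q, ContinuousMap.add_apply, ContinuousMap.smul_apply, smul_eq_mul]
    change _ = _ + (β₁ x + β₂ x) * _ + (ζ ^ 2 * (a x : ℂ) ^ 2 + ζ * (-Complex.I * ((deriv a x : ℝ) : ℂ)
      + Complex.I * (a x : ℂ) * (β₁ x - β₂ x)) + β₃ x) * _
    ring
  refine ⟨fun ζ => shooting h b (q ζ) ⟨r, right_mem_Icc.2 h⟩, differentiable_shooting h b hq _,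
    fun ζ => ⟨?_, fun hD => ?_⟩⟩
  · rintro ⟨g, hg, ⟨x, hx, hgx⟩, hode, hgl, hgu⟩
    have key := eq_deriv_mul_shooting h b (q ζ) hg hgl fun x => by rw [← hHop, hode x x.2]
    have hr0 := key ⟨r, right_mem_Icc.2 h⟩
    have hx0 := key ⟨x, hx⟩
    refine (mul_eq_zero.1 (hr0.symm.trans hgu)).resolve_left fun h0 => hgx ?_
    rw [h0, zero_mul] at hx0
    exact hx0
  · obtain ⟨g, hg, hgl, hg'l, hode, hgs⟩ := exists_contDiff_eq_shooting h b (q ζ)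
    refine ⟨g, hg, ?_, fun x hx => (hHop ζ g ⟨x, hx⟩).trans (hode ⟨x, hx⟩), hgl,
      (hgs ⟨r, right_mem_Icc.2 h⟩).trans hD⟩
    by_contra! hzero
    have hmem : -r ∈ Icc (-r) r := left_mem_Icc.2 h
    have h1 : HasDerivWithinAt g 1 (Icc (-r) r) (-r) :=
      hg'l ▸ (hg.differentiable two_ne_zero (-r)).hasDerivAt.hasDerivWithinAt
    have h0 : HasDerivWithinAt g 0 (Icc (-r) r) (-r) :=
      (hasDerivWithinAt_const (-r) (Icc (-r) r) (0 : ℂ)).congr hzero hgl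
    exact one_ne_zero ((uniqueDiffOn_Icc (by linarith) (-r) hmem).eq_deriv _ h1 h0)

/-- A nonzero entire function has finitely many zeros in each compact set. -/
theorem Differentiable.finite_zeros_inter_isCompact {D : ℂ → ℂ} (hD : Differentiable ℂ D) {z : ℂ}
    (hz : D z ≠ 0) {Z : Set ℂ} (hZ : IsCompact Z) : {ζ ∈ Z | D ζ = 0}.Finite := by
  by_contra hinf
  obtain ⟨x, -, hx⟩ := Set.Infinite.exists_accPt_of_subset_isCompact hinf hZ (sep_subset _ _)
  rw [accPt_iff_frequently_nhdsNE] at hx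
  have han : AnalyticOnNhd ℂ D univ := fun w _ => hD.analyticAt w
  exact hz (han.eqOn_zero_of_preconnected_of_frequently_eq_zero isPreconnected_univ (mem_univ x)
    (hx.mono fun _ hy => hy.2) (mem_univ z))

/-- For every compact `K ⊆ [0,∞)`, the set of `s ∈ K` such that `s - 1/2 + iγ ∈ 𝔖`
for some `γ ∈ ℝ` is finite. -/
theorem exceptional_set_finite (r : ℝ) (hr : 0 < r) (a : ℝ → ℝ) (ha : ContDiff ℝ (⊤ : ℕ∞) a)
    (ha0 : ∀ x ∈ Icc (-r) r, a x ≠ 0)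
    (β₁ β₂ β₃ : ℝ → ℂ) (hβ₁ : ContDiff ℝ (⊤ : ℕ∞) β₁) (hβ₂ : ContDiff ℝ (⊤ : ℕ∞) β₂)
    (hβ₃ : ContDiff ℝ (⊤ : ℕ∞) β₃)
    (K : Set ℝ) (hK : IsCompact K) (hK0 : K ⊆ Ici 0) :
    {s ∈ K | ∃ γ : ℝ, Complex.mk (s - 1/2) γ ∈ frakS r a β₁ β₂ β₃}.Finite := by
  obtain ⟨D, hD, hDS⟩ := exists_differentiable_mem_frakS_iff r hr ha hβ₁.continuous
    hβ₂.continuous hβ₃.continuous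
  obtain ⟨R, hR⟩ := hK.isBounded.exists_norm_le
  set S := |R| + 1 with hS
  obtain ⟨M, hM⟩ := exists_abs_im_le_of_mem_frakS r ha ha0 hβ₁.continuous
    hβ₂.continuous hβ₃.continuous S
  have hz : D ⟨0, |M| + 1⟩ ≠ 0 := fun h0 => by
    have := hM _ ((hDS _).2 h0) (by simpa using by positivity)
    have h1 : |M| + 1 ≤ M := (le_abs_self _).trans this
    linarith [le_abs_self M]
  have hfin := hD.finite_zeros_inter_isCompact hz (isCompact_closedBall (0 : ℂ) (S + M))
  refine (hfin.image fun ζ => ζ.re + 1 / 2).subset ?_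
  rintro s ⟨hsK, γ, hγ⟩
  have hre : |s - 1 / 2| ≤ S := by
    have h1 := abs_le.1 ((hR s hsK).trans (le_abs_self R))
    exact abs_le.2 ⟨by linarith, by linarith⟩
  refine ⟨⟨s - 1 / 2, γ⟩, ⟨?_, (hDS _).1 hγ⟩, by simp⟩
  rw [mem_closedBall_zero_iff]
  exact (Complex.norm_le_abs_re_add_abs_im _).trans (add_le_add hre (hM _ hγ hre))
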